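/- If (M,𝔛) ⊨ RCA₀ is a second-order structure such that the partial order P_𝔛 has the countable chain condition, then 𝔛 is countable. -/

import Mathlib

/-!
Each `A ∈ 𝔛` is sent to the set `hat A` of pairs `⟨a, c⟩` where `c` is the least code of a set
agreeing with `A` below `a`.  Codes are pairs `c = ⟨b, d⟩`, and `c` declares `i` to be an element
when `1 + (i + 1) b ∣ d`, as for Gödel's β-function.

* `hat A` is `Δ₀` in `A`, so it lies in `𝔛` by comprehension (`hat_mem`).
* `hat A` is unbounded, because every initial segment of `A` has a code (`exists_agree`): if `b` is
  a common multiple of `1, …, a`, then the moduli `1 + (i + 1) b` with `i < a` are pairwise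
  coprime, and `d` is obtained by `Σ₁` induction as the product of those with `i ∈ A`
  (`dvd_step`). A least code exists by `Δ₀` induction (`exists_least`).
* If `A` and `B` differ at `x`, any `⟨a, c⟩ ∈ hat A ∩ hat B` has `a ≤ x`. A code for `A` below
  `x + 1` is also one below `a`, so the least code `c` is at most the least code for `A` below
  `x + 1`. Hence `hat A ∩ hat B` is bounded (`hat_inter_bdd`).

So `A ↦ hat A` injects `𝔛` onto an antichain of `P_𝔛`, and the countable chain condition makes
`𝔛` countable. No countability of `M` is needed.
-/

namespace Paper

/-! ### Syntax of (second-order) arithmetic.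

Terms of the language `L_A = {0, 1, +, ·, <}`, with number variables indexed by `ℕ`.
Formulas also allow atomic formulas `t ∈ X_k` (membership in a set variable) and
set quantifiers `allS`; first-order formulas are those avoiding both. -/

inductive PTerm where
  | var : ℕ → PTerm
  | zero : PTerm
  | one : PTerm
  | add : PTerm → PTerm → PTerm
  | mul : PTerm → PTerm → PTerm

inductive Fml where
  | eq : PTerm → PTerm → Fml
  | lt : PTerm → PTerm → Fml
  | mem : PTerm → ℕ → Fml
  | not : Fml → Fml
  | imp : Fml → Fml → Fml
  | all : ℕ → Fml → Fml
  | allS : ℕ → Fml → Fml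

def Fml.and (φ ψ : Fml) : Fml := .not (.imp φ (.not ψ))
def Fml.or (φ ψ : Fml) : Fml := .imp (.not φ) ψ
def Fml.iff (φ ψ : Fml) : Fml := (Fml.imp φ ψ).and (Fml.imp ψ φ)
def Fml.ex (x : ℕ) (φ : Fml) : Fml := .not (.all x (.not φ))
def Fml.exS (k : ℕ) (φ : Fml) : Fml := .not (.allS k (.not φ))

/-- A structure for the language `{0, 1, +, ·, <}` on a carrier `M`
(bundled, so that several structures can live on the same carrier). -/
structure AStr (M : Type) where
  zero : M
  one : M
  add : M → M → M
  mul : M → M → M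
  lt : M → M → Prop

/-- The standard model of arithmetic. -/
def natStr : AStr ℕ := ⟨0, 1, (· + ·), (· * ·), (· < ·)⟩

namespace PTerm

def vars : PTerm → Finset ℕ
  | var n => {n}
  | zero => ∅
  | one => ∅
  | add t u => t.vars ∪ u.vars
  | mul t u => t.vars ∪ u.vars

/-- Substitution of a term `r` for the variable `x` (used only with `r` closed or
with `vars r ⊆ {x}`, in which case it is capture-free). -/
def subst (x : ℕ) (r : PTerm) : PTerm → PTerm
  | var n => if n = x then r else var n
  | zero => zero
  | one => one
  | add t u => add (subst x r t) (subst x r u)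
  | mul t u => mul (subst x r t) (subst x r u)

def val {M : Type} (S : AStr M) (v : ℕ → M) : PTerm → M
  | var n => v n
  | zero => S.zero
  | one => S.one
  | add t u => S.add (t.val S v) (u.val S v)
  | mul t u => S.mul (t.val S v) (u.val S v)

end PTerm

namespace Fml

/-- Free number variables. -/
def freeN : Fml → Finset ℕ
  | eq t u => t.vars ∪ u.vars
  | lt t u => t.vars ∪ u.vars
  | mem t _ => t.vars
  | not φ => φ.freeN
  | imp φ ψ => φ.freeN ∪ ψ.freeN
  | all x φ => φ.freeN.erase x
  | allS _ φ => φ.freeN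

/-- Substitution of a term `r` for the (free) variable `x`. -/
def substN (x : ℕ) (r : PTerm) : Fml → Fml
  | eq t u => eq (PTerm.subst x r t) (PTerm.subst x r u)
  | lt t u => lt (PTerm.subst x r t) (PTerm.subst x r u)
  | mem t k => mem (PTerm.subst x r t) k
  | not φ => not (substN x r φ)
  | imp φ ψ => imp (substN x r φ) (substN x r ψ)
  | all y φ => if y = x then all y φ else all y (substN x r φ)
  | allS k φ => allS k (substN x r φ)

/-- First-order formulas: no set variables, no set quantifiers. -/
def IsFO : Fml → Prop
  | eq _ _ => True
  | lt _ _ => True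
  | mem _ _ => False
  | not φ => φ.IsFO
  | imp φ ψ => φ.IsFO ∧ ψ.IsFO
  | all _ φ => φ.IsFO
  | allS _ _ => False

/-- Arithmetical formulas: set variables allowed as parameters, but no set quantifiers. -/
def IsArith : Fml → Prop
  | eq _ _ => True
  | lt _ _ => True
  | mem _ _ => True
  | not φ => φ.IsArith
  | imp φ ψ => φ.IsArith ∧ ψ.IsArith
  | all _ φ => φ.IsArith
  | allS _ _ => False

end Fml

/-! ### Satisfaction -/

/-- Satisfaction for a second-order structure `(M, 𝔛)`: number quantifiers range over `M`,
set quantifiers range over `𝔛`. -/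
def Sat {M : Type} (S : AStr M) (𝔛 : Set (Set M)) : (ℕ → M) → (ℕ → Set M) → Fml → Prop
  | v, _, .eq t u => t.val S v = u.val S v
  | v, _, .lt t u => S.lt (t.val S v) (u.val S v)
  | v, w, .mem t k => t.val S v ∈ w k
  | v, w, .not φ => ¬ Sat S 𝔛 v w φ
  | v, w, .imp φ ψ => Sat S 𝔛 v w φ → Sat S 𝔛 v w ψ
  | v, w, .all x φ => ∀ a : M, Sat S 𝔛 (Function.update v x a) w φ
  | v, w, .allS k φ => ∀ X ∈ 𝔛, Sat S 𝔛 v (Function.update w k X) φ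

/-- First-order satisfaction. -/
def SatFO {M : Type} (S : AStr M) (v : ℕ → M) (φ : Fml) : Prop :=
  Sat S Set.univ v (fun _ => ∅) φ

/-- `M ⊨ T` for a first-order theory `T`. -/
def ModelsT {M : Type} (S : AStr M) (T : Set Fml) : Prop :=
  ∀ φ ∈ T, ∀ v, SatFO S v φ

/-- Semantic consequence (equivalently, by the completeness theorem, provability). -/
def Proves (T : Set Fml) (φ : Fml) : Prop :=
  ∀ (M : Type) (S : AStr M), ModelsT S T → ∀ v, SatFO S v φ

/-- Consistency (equivalently, by the completeness theorem, having a model). -/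
def ConsistentT (T : Set Fml) : Prop :=
  ∃ (M : Type) (S : AStr M), ModelsT S T

def IsFOSentence (φ : Fml) : Prop := φ.IsFO ∧ φ.freeN = ∅

/-- Completeness of a theory. -/
def CompleteT (T : Set Fml) : Prop :=
  ∀ φ, IsFOSentence φ → (Proves T φ ∨ Proves T φ.not)

/-! ### Peano arithmetic -/

def numeral : ℕ → PTerm
  | 0 => .zero
  | n + 1 => .add (numeral n) .one

def univClosure (φ : Fml) : Fml := (φ.freeN.sort (· ≤ ·)).foldr Fml.all φ

/-- The induction axiom for `φ` in the variable `x` (before taking universal closure). -/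
def indFml (φ : Fml) (x : ℕ) : Fml :=
  .imp ((φ.substN x .zero).and (.all x (.imp φ (φ.substN x (.add (.var x) .one)))))
    (.all x φ)

/-- The axioms of first-order Peano arithmetic `PA`. -/
def PAax : Set Fml :=
  {Fml.all 0 (.not (.eq (.add (.var 0) .one) .zero)),
   Fml.all 0 (.all 1 (.imp (.eq (.add (.var 0) .one) (.add (.var 1) .one))
     (.eq (.var 0) (.var 1)))),
   Fml.all 0 (.eq (.add (.var 0) .zero) (.var 0)),
   Fml.all 0 (.all 1 (.eq (.add (.var 0) (.add (.var 1) .one))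
     (.add (.add (.var 0) (.var 1)) .one))),
   Fml.all 0 (.eq (.mul (.var 0) .zero) .zero),
   Fml.all 0 (.all 1 (.eq (.mul (.var 0) (.add (.var 1) .one))
     (.add (.mul (.var 0) (.var 1)) (.var 0)))),
   Fml.all 0 (.all 1 (Fml.iff (.lt (.var 0) (.var 1))
     (Fml.ex 2 (.eq (.add (.var 0) (.add (.var 2) .one)) (.var 1)))))} ∪
  {ψ | ∃ φ x, Fml.IsFO φ ∧ ψ = univClosure (indFml φ x)}

/-! ### Gödel coding -/

/-- The Cantor pairing function (the canonical pairing `⟨·,·⟩`). -/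
def cpair (a b : ℕ) : ℕ := (a + b) * (a + b + 1) / 2 + a

def PTerm.code : PTerm → ℕ
  | .var n => cpair 0 n
  | .zero => cpair 1 0
  | .one => cpair 2 0
  | .add t u => cpair 3 (cpair t.code u.code)
  | .mul t u => cpair 4 (cpair t.code u.code)

def Fml.code : Fml → ℕ
  | .eq t u => cpair 5 (cpair t.code u.code)
  | .lt t u => cpair 6 (cpair t.code u.code)
  | .not φ => cpair 7 φ.code
  | .imp φ ψ => cpair 8 (cpair φ.code ψ.code)
  | .all x φ => cpair 9 (cpair x φ.code)
  | .mem t k => cpair 10 (cpair t.code k)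
  | .allS k φ => cpair 11 (cpair k φ.code)

/-- A theory identified with its set of Gödel codes. -/
def theoryCode (T : Set Fml) : Set ℕ := Fml.code '' T

/-! ### The arithmetical hierarchy (syntactic classes) -/

inductive IsDelta0 : Fml → Prop
  | eq (t u) : IsDelta0 (.eq t u)
  | lt (t u) : IsDelta0 (.lt t u)
  | mem (t k) : IsDelta0 (.mem t k)
  | not {φ} : IsDelta0 φ → IsDelta0 φ.not
  | imp {φ ψ} : IsDelta0 φ → IsDelta0 ψ → IsDelta0 (φ.imp ψ)
  | ball {φ} (x t) : x ∉ PTerm.vars t → IsDelta0 φ →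
      IsDelta0 (.all x (.imp (.lt (.var x) t) φ))

def IsSigma01 (φ : Fml) : Prop := ∃ x ψ, IsDelta0 ψ ∧ φ = Fml.ex x ψ

def IsPi01 (φ : Fml) : Prop := ∃ x ψ, IsDelta0 ψ ∧ φ = Fml.all x ψ

/-! ### Subsystems of second-order arithmetic, semantically -/

/-- The basic axioms (`PA⁻`, a discretely ordered commutative semiring). -/
def PAminusSem {M : Type} (S : AStr M) : Prop :=
  (∀ a b c : M, S.add a (S.add b c) = S.add (S.add a b) c) ∧
  (∀ a b : M, S.add a b = S.add b a) ∧
  (∀ a b c : M, S.mul a (S.mul b c) = S.mul (S.mul a b) c) ∧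
  (∀ a b : M, S.mul a b = S.mul b a) ∧
  (∀ a b c : M, S.mul a (S.add b c) = S.add (S.mul a b) (S.mul a c)) ∧
  (∀ a : M, S.add a S.zero = a) ∧
  (∀ a : M, S.mul a S.zero = S.zero) ∧
  (∀ a : M, S.mul a S.one = a) ∧
  (∀ a b c : M, S.lt a b → S.lt b c → S.lt a c) ∧
  (∀ a : M, ¬ S.lt a a) ∧
  (∀ a b : M, S.lt a b ∨ a = b ∨ S.lt b a) ∧
  (∀ a b c : M, S.lt a b → S.lt (S.add a c) (S.add b c)) ∧
  (∀ a b c : M, S.lt S.zero c → S.lt a b → S.lt (S.mul a c) (S.mul b c)) ∧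
  (∀ a b : M, S.lt a b → ∃ c : M, S.add a c = b) ∧
  S.lt S.zero S.one ∧
  (∀ a : M, S.lt S.zero a → a = S.one ∨ S.lt S.one a) ∧
  (∀ a : M, a = S.zero ∨ S.lt S.zero a)

/-- `(M,𝔛)` satisfies the induction axiom for `φ` in the variable `x`
(with arbitrary number and set parameters). -/
def SatInd {M : Type} (S : AStr M) (𝔛 : Set (Set M)) (φ : Fml) (x : ℕ) : Prop :=
  ∀ (v : ℕ → M) (w : ℕ → Set M), (∀ k, w k ∈ 𝔛) →
    (Sat S 𝔛 (Function.update v x S.zero) w φ ∧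
      ∀ a, Sat S 𝔛 (Function.update v x a) w φ →
        Sat S 𝔛 (Function.update v x (S.add a S.one)) w φ) →
    ∀ a, Sat S 𝔛 (Function.update v x a) w φ

/-- `(M,𝔛) ⊨ RCA₀`: basic axioms, `Σ⁰₁` induction and `Δ⁰₁` comprehension. -/
def SatRCA0 {M : Type} (S : AStr M) (𝔛 : Set (Set M)) : Prop :=
  PAminusSem S ∧
  (∀ φ x, IsSigma01 φ → SatInd S 𝔛 φ x) ∧
  (∀ φ ψ x, IsSigma01 φ → IsPi01 ψ →
    ∀ (v : ℕ → M) (w : ℕ → Set M), (∀ k, w k ∈ 𝔛) →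
      (∀ a, Sat S 𝔛 (Function.update v x a) w φ ↔ Sat S 𝔛 (Function.update v x a) w ψ) →
      {a : M | Sat S 𝔛 (Function.update v x a) w φ} ∈ 𝔛)

/-- `(M,𝔛) ⊨ ACA₀`: basic axioms, the induction axiom and arithmetical comprehension. -/
def SatACA0 {M : Type} (S : AStr M) (𝔛 : Set (Set M)) : Prop :=
  PAminusSem S ∧
  (∀ X ∈ 𝔛, S.zero ∈ X → (∀ a, a ∈ X → S.add a S.one ∈ X) → ∀ a, a ∈ X) ∧
  (∀ φ x, Fml.IsArith φ → ∀ (v : ℕ → M) (w : ℕ → Set M), (∀ k, w k ∈ 𝔛) →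
    {a : M | Sat S 𝔛 (Function.update v x a) w φ} ∈ 𝔛)

/-! ### Arithmetization inside a model

All notions below unfold the standard (`Δ₀`/`Σ₁`) arithmetized definitions at the
meta-level, using the operations of a structure `S : AStr M`.  On models of `IΣ₁`
they agree with satisfaction of the corresponding arithmetic formulas. -/

namespace AStr

variable {M : Type} (S : AStr M)

/-- Interpretation of numerals. -/
def num : ℕ → M
  | 0 => S.zero
  | n + 1 => S.add (num n) S.one

def le (a b : M) : Prop := S.lt a b ∨ a = b

def two : M := S.add S.one S.one

/-- `p = ⟨a,b⟩` for the Cantor pairing function: `2p = (a+b)(a+b+1) + 2a`. -/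
def PairRel (p a b : M) : Prop :=
  S.mul S.two p = S.add (S.mul (S.add a b) (S.add (S.add a b) S.one)) (S.mul S.two a)

/-- `r = a mod m`. -/
def ModRel (a m r : M) : Prop := S.lt r m ∧ ∃ q, a = S.add (S.mul q m) r

/-- Gödel's β-function: `x = β(c, i)` where `c = ⟨a,b⟩` and `x = a mod (1 + (i+1)b)`. -/
def BetaRel (c i x : M) : Prop :=
  ∃ a b, S.PairRel c a b ∧ S.ModRel a (S.add S.one (S.mul (S.add i S.one) b)) x

/-- `s` codes a sequence of length `l` (as `s = ⟨c, l⟩`). -/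
def SeqLen (s l : M) : Prop := ∃ c, S.PairRel s c l

/-- The `i`-th entry of the sequence coded by `s` is `x`. -/
def SeqAt (s i x : M) : Prop := ∃ c l, S.PairRel s c l ∧ S.lt i l ∧ S.BetaRel c i x

/-- The fixed `Δ₀` coding formula `x ∈ y` for (bounded) sets:
`y = ⟨a,b⟩` and `a mod (1 + (x+1)b) = 1` with modulus `> 1`, and `x < y`. -/
def MemRel (x y : M) : Prop :=
  S.lt x y ∧ ∃ a b, S.PairRel y a b ∧
    S.lt S.one (S.add S.one (S.mul (S.add x S.one) b)) ∧
    S.ModRel a (S.add S.one (S.mul (S.add x S.one) b)) S.one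

/-- Tagged pairs, used for codes of syntax: `x = ⟨tag, payload⟩`. -/
def Node (x tag payload : M) : Prop := S.PairRel x tag payload

/-- `x` is the code of the variable `v`. -/
def VarC (v x : M) : Prop := S.Node x (S.num 0) v

def AddC (t u y : M) : Prop := ∃ p, S.PairRel p t u ∧ S.Node y (S.num 3) p
def MulC (t u y : M) : Prop := ∃ p, S.PairRel p t u ∧ S.Node y (S.num 4) p
def EqC (t u y : M) : Prop := ∃ p, S.PairRel p t u ∧ S.Node y (S.num 5) p
def LtC (t u y : M) : Prop := ∃ p, S.PairRel p t u ∧ S.Node y (S.num 6) p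
def NotC (x y : M) : Prop := S.Node y (S.num 7) x
def ImpC (x y z : M) : Prop := ∃ p, S.PairRel p x y ∧ S.Node z (S.num 8) p
def AllC (v x y : M) : Prop := ∃ p, S.PairRel p v x ∧ S.Node y (S.num 9) p

/-- `s` codes a construction sequence for terms. -/
def IsTermConSeq (s : M) : Prop :=
  ∀ i x, S.SeqAt s i x →
    (∃ v, S.VarC v x) ∨ S.Node x (S.num 1) (S.num 0) ∨ S.Node x (S.num 2) (S.num 0) ∨
    (∃ j k y z, S.lt j i ∧ S.lt k i ∧ S.SeqAt s j y ∧ S.SeqAt s k z ∧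
      (S.AddC y z x ∨ S.MulC y z x))

/-- `x` is a term code (in the sense of `M`, possibly nonstandard). -/
def TermCodeM (x : M) : Prop := ∃ s i, S.IsTermConSeq s ∧ S.SeqAt s i x

/-- `s` codes a construction sequence for (first-order) formulas. -/
def IsFmlConSeq (s : M) : Prop :=
  ∀ i x, S.SeqAt s i x →
    (∃ t u, S.TermCodeM t ∧ S.TermCodeM u ∧ (S.EqC t u x ∨ S.LtC t u x)) ∨
    (∃ j y, S.lt j i ∧ S.SeqAt s j y ∧ S.NotC y x) ∨
    (∃ j k y z, S.lt j i ∧ S.lt k i ∧ S.SeqAt s j y ∧ S.SeqAt s k z ∧ S.ImpC y z x) ∨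
    (∃ j v y, S.lt j i ∧ S.SeqAt s j y ∧ S.AllC v y x)

/-- `x` is a formula code (in the sense of `M`, possibly nonstandard). -/
def FmlCodeM (x : M) : Prop := ∃ s i, S.IsFmlConSeq s ∧ S.SeqAt s i x

/-- Construction sequences of pairs (term code, occurrence flag for the variable `v`). -/
def IsOccConSeq (v s : M) : Prop :=
  ∀ i p, S.SeqAt s i p → ∃ x f, S.PairRel p x f ∧
    ((S.VarC v x ∧ f = S.num 1) ∨
     (∃ u, S.VarC u x ∧ u ≠ v ∧ f = S.num 0) ∨
     ((S.Node x (S.num 1) (S.num 0) ∨ S.Node x (S.num 2) (S.num 0)) ∧ f = S.num 0) ∨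
     (∃ j k y z g h pj pk, S.lt j i ∧ S.lt k i ∧ S.SeqAt s j pj ∧ S.SeqAt s k pk ∧
       S.PairRel pj y g ∧ S.PairRel pk z h ∧ (S.AddC y z x ∨ S.MulC y z x) ∧
       ((f = S.num 1 ∧ (g = S.num 1 ∨ h = S.num 1)) ∨
        (f = S.num 0 ∧ g = S.num 0 ∧ h = S.num 0))))

/-- `f = 1` iff the variable `v` occurs in the term coded by `t` (`f ∈ {0,1}`). -/
def OccT (v t f : M) : Prop :=
  ∃ s i p, S.IsOccConSeq v s ∧ S.SeqAt s i p ∧ S.PairRel p t f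

/-- Construction sequences of pairs (formula code, freeness flag for the variable `v`). -/
def IsFreeConSeq (v s : M) : Prop :=
  ∀ i p, S.SeqAt s i p → ∃ x f, S.PairRel p x f ∧
    ((∃ t u, (S.EqC t u x ∨ S.LtC t u x) ∧
       ((f = S.num 1 ∧ (S.OccT v t (S.num 1) ∨ S.OccT v u (S.num 1))) ∨
        (f = S.num 0 ∧ S.OccT v t (S.num 0) ∧ S.OccT v u (S.num 0)))) ∨
     (∃ j y g pj, S.lt j i ∧ S.SeqAt s j pj ∧ S.PairRel pj y g ∧ S.NotC y x ∧ f = g) ∨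
     (∃ j k y z g h pj pk, S.lt j i ∧ S.lt k i ∧ S.SeqAt s j pj ∧ S.SeqAt s k pk ∧
       S.PairRel pj y g ∧ S.PairRel pk z h ∧ S.ImpC y z x ∧
       ((f = S.num 1 ∧ (g = S.num 1 ∨ h = S.num 1)) ∨
        (f = S.num 0 ∧ g = S.num 0 ∧ h = S.num 0))) ∨
     (∃ j w y g pj, S.lt j i ∧ S.SeqAt s j pj ∧ S.PairRel pj y g ∧ S.AllC w y x ∧
       ((w = v ∧ f = S.num 0) ∨ (w ≠ v ∧ f = g))))

/-- `f = 1` iff the variable `v` is free in the formula coded by `φ`. -/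
def FreeF (v φ f : M) : Prop :=
  ∃ s i p, S.IsFreeConSeq v s ∧ S.SeqAt s i p ∧ S.PairRel p φ f

/-- Construction sequences of pairs (term code, result of substituting `t` for `v`). -/
def IsSubTConSeq (v t s : M) : Prop :=
  ∀ i p, S.SeqAt s i p → ∃ x x', S.PairRel p x x' ∧
    ((S.VarC v x ∧ x' = t) ∨
     (∃ u, S.VarC u x ∧ u ≠ v ∧ x' = x) ∨
     ((S.Node x (S.num 1) (S.num 0) ∨ S.Node x (S.num 2) (S.num 0)) ∧ x' = x) ∨
     (∃ j k y z y' z' pj pk, S.lt j i ∧ S.lt k i ∧ S.SeqAt s j pj ∧ S.SeqAt s k pk ∧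
       S.PairRel pj y y' ∧ S.PairRel pk z z' ∧
       ((S.AddC y z x ∧ S.AddC y' z' x') ∨ (S.MulC y z x ∧ S.MulC y' z' x'))))

/-- Substitution of the term (code) `t` for the variable `v` in terms: `x' = x[t/v]`. -/
def SubT (v t x x' : M) : Prop :=
  ∃ s i p, S.IsSubTConSeq v t s ∧ S.SeqAt s i p ∧ S.PairRel p x x'

/-- Construction sequences for capture-free substitution in formulas. -/
def IsSubFConSeq (v t s : M) : Prop :=
  ∀ i p, S.SeqAt s i p → ∃ x x', S.PairRel p x x' ∧
    ((∃ a b a' b', S.SubT v t a a' ∧ S.SubT v t b b' ∧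
       ((S.EqC a b x ∧ S.EqC a' b' x') ∨ (S.LtC a b x ∧ S.LtC a' b' x'))) ∨
     (∃ j y y' pj, S.lt j i ∧ S.SeqAt s j pj ∧ S.PairRel pj y y' ∧
       S.NotC y x ∧ S.NotC y' x') ∨
     (∃ j k y z y' z' pj pk, S.lt j i ∧ S.lt k i ∧ S.SeqAt s j pj ∧ S.SeqAt s k pk ∧
       S.PairRel pj y y' ∧ S.PairRel pk z z' ∧ S.ImpC y z x ∧ S.ImpC y' z' x') ∨
     (∃ w y, S.AllC w y x ∧
       ((w = v ∧ x' = x) ∨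
        (w ≠ v ∧ (S.OccT w t (S.num 0) ∨ S.FreeF v y (S.num 0)) ∧
          ∃ j y' pj, S.lt j i ∧ S.SeqAt s j pj ∧ S.PairRel pj y y' ∧ S.AllC w y' x'))))

/-- Capture-free substitution in formulas: `x' = x[t/v]`, with `t` substitutable for `v`. -/
def SubF (v t x x' : M) : Prop :=
  ∃ s i p, S.IsSubFConSeq v t s ∧ S.SeqAt s i p ∧ S.PairRel p x x'

/-- `x` is (the code of) a generalization `∀v₁ ⋯ ∀vₖ y` of `y`. -/
def GenOf (y x : M) : Prop :=
  ∃ s i, S.SeqAt s (S.num 0) y ∧ S.SeqAt s i x ∧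
    ∀ j z z', S.SeqAt s j z → S.SeqAt s (S.add j S.one) z' → S.le (S.add j S.one) i →
      ∃ v, S.AllC v z z'

/-- Codes of instances of the logical axiom schemes (a Hilbert-style calculus with
modus ponens as the only rule; axioms are taken together with their generalizations). -/
def LogAxCore (x : M) : Prop :=
  -- A1 : a → (b → a)
  (∃ a b y, S.FmlCodeM a ∧ S.FmlCodeM b ∧ S.ImpC b a y ∧ S.ImpC a y x) ∨
  -- A2 : (a → (b → c)) → ((a → b) → (a → c))
  (∃ a b c bc abc ab ac r, S.FmlCodeM a ∧ S.FmlCodeM b ∧ S.FmlCodeM c ∧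
    S.ImpC b c bc ∧ S.ImpC a bc abc ∧ S.ImpC a b ab ∧ S.ImpC a c ac ∧
    S.ImpC ab ac r ∧ S.ImpC abc r x) ∨
  -- A3 : (¬b → ¬a) → (a → b)
  (∃ a b na nb l r, S.FmlCodeM a ∧ S.FmlCodeM b ∧ S.NotC a na ∧ S.NotC b nb ∧
    S.ImpC nb na l ∧ S.ImpC a b r ∧ S.ImpC l r x) ∨
  -- A4 : ∀v a → a[t/v]
  (∃ v t a a' al, S.TermCodeM t ∧ S.FmlCodeM a ∧ S.AllC v a al ∧ S.SubF v t a a' ∧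
    S.ImpC al a' x) ∨
  -- A5 : ∀v (a → b) → (∀v a → ∀v b)
  (∃ v a b ab alab ala alb r, S.FmlCodeM a ∧ S.FmlCodeM b ∧ S.ImpC a b ab ∧
    S.AllC v ab alab ∧ S.AllC v a ala ∧ S.AllC v b alb ∧ S.ImpC ala alb r ∧
    S.ImpC alab r x) ∨
  -- A6 : a → ∀v a, for v not free in a
  (∃ v a ala, S.FmlCodeM a ∧ S.FreeF v a (S.num 0) ∧ S.AllC v a ala ∧ S.ImpC a ala x) ∨
  -- E1 : t = t
  (∃ t, S.TermCodeM t ∧ S.EqC t t x) ∨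
  -- E2 : u = w → w = u (variables)
  (∃ u w vu vw e1 e2, S.VarC u vu ∧ S.VarC w vw ∧ S.EqC vu vw e1 ∧ S.EqC vw vu e2 ∧
    S.ImpC e1 e2 x) ∨
  -- E3 : u = w → (w = z → u = z) (variables)
  (∃ u w z vu vw vz e1 e2 e3 r, S.VarC u vu ∧ S.VarC w vw ∧ S.VarC z vz ∧
    S.EqC vu vw e1 ∧ S.EqC vw vz e2 ∧ S.EqC vu vz e3 ∧ S.ImpC e2 e3 r ∧ S.ImpC e1 r x) ∨
  -- E4 : congruence of +, ·, < with respect to = (variables)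
  (∃ u1 w1 u2 w2 a1 b1 a2 b2 e1 e2 s1 s2 es r,
    S.VarC u1 a1 ∧ S.VarC w1 b1 ∧ S.VarC u2 a2 ∧ S.VarC w2 b2 ∧
    S.EqC a1 b1 e1 ∧ S.EqC a2 b2 e2 ∧
    ((S.AddC a1 a2 s1 ∧ S.AddC b1 b2 s2 ∧ S.EqC s1 s2 es) ∨
     (S.MulC a1 a2 s1 ∧ S.MulC b1 b2 s2 ∧ S.EqC s1 s2 es) ∨
     (S.LtC a1 a2 s1 ∧ S.LtC b1 b2 s2 ∧ S.ImpC s1 s2 es)) ∧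
    S.ImpC e2 es r ∧ S.ImpC e1 r x) ∨
  -- E5 : congruence of = (variables)
  (∃ u1 w1 u2 w2 a1 b1 a2 b2 e1 e2 d1 d2 inner r,
    S.VarC u1 a1 ∧ S.VarC w1 b1 ∧ S.VarC u2 a2 ∧ S.VarC w2 b2 ∧
    S.EqC a1 b1 e1 ∧ S.EqC a2 b2 e2 ∧ S.EqC a1 a2 d1 ∧ S.EqC b1 b2 d2 ∧
    S.ImpC d1 d2 inner ∧ S.ImpC e2 inner r ∧ S.ImpC e1 r x)

/-- Logical axioms: generalizations of instances of the axiom schemes. -/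
def LogAx (x : M) : Prop := ∃ y, S.LogAxCore y ∧ S.GenOf y x

/-- `s` codes a proof of `φ` from the set `Γ ⊆ M` of (codes of) sentences:
every entry is a logical axiom, a member of `Γ`, or follows by modus ponens. -/
def ProofFrom (Γ : Set M) (s φ : M) : Prop :=
  (∃ i, S.SeqAt s i φ) ∧
  ∀ i x, S.SeqAt s i x →
    S.LogAx x ∨ x ∈ Γ ∨
    (∃ j k y z, S.lt j i ∧ S.lt k i ∧ S.SeqAt s j y ∧ S.SeqAt s k z ∧ S.ImpC y x z)

/-- Provability (in the sense of `M`) from the axiom set `Γ ⊆ M`. -/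
def ProvFrom (Γ : Set M) (φ : M) : Prop := ∃ s, S.ProofFrom Γ s φ

/-- `M ⊨ Con_Γ` : there is no (possibly nonstandard) proof of a contradiction from `Γ`. -/
def ConOf (Γ : Set M) : Prop :=
  ¬ ∃ φ nφ, S.NotC φ nφ ∧ S.ProvFrom Γ φ ∧ S.ProvFrom Γ nφ

/-- `M ⊨ Con_T` for a (standard) theory `T`: `M` thinks every finite subtheory
of `T` is consistent. -/
def SatConTheory (T : Set Fml) : Prop :=
  ∀ F : Finset Fml, ↑F ⊆ T → S.ConOf {x : M | ∃ φ ∈ F, x = S.num (Fml.code φ)}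

/-! ### Coded sets, standard systems, filters on `P_𝔛` -/

/-- `A` is unbounded in `M`. -/
def Unb (A : Set M) : Prop := ∀ b, ∃ a ∈ A, S.lt b a

/-- `P_𝔛`: the collection of unbounded sets in `𝔛` (a partial order under `⊆`). -/
def PX (𝔛 : Set (Set M)) : Set (Set M) := {A | A ∈ 𝔛 ∧ S.Unb A}

/-- The `a`-th slice `(A)_a = {b | ⟨a,b⟩ ∈ A}`. -/
def SliceAt (A : Set M) (a : M) : Set M := {b | ∃ p, S.PairRel p a b ∧ p ∈ A}

/-- A function `M → M` is coded in `𝔛` if its graph (via the canonical pairing)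
belongs to `𝔛`. -/
def CodedFun (𝔛 : Set (Set M)) (f : M → M) : Prop :=
  ∃ G ∈ 𝔛, ∀ a b, f a = b ↔ b ∈ S.SliceAt G a

/-- A family `F` of sets is definable (over `(M,𝔛)`) if `{a | (A)_a ∈ F} ∈ 𝔛`
for every `A ∈ 𝔛`. -/
def DefinableFam (𝔛 F : Set (Set M)) : Prop :=
  ∀ A ∈ 𝔛, {a : M | S.SliceAt A a ∈ F} ∈ 𝔛

/-- `F` is a complete family: every function coded in `𝔛` with bounded range is
constant on some member of `F`. -/
def CompleteOn (𝔛 F : Set (Set M)) : Prop :=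
  ∀ f : M → M, S.CodedFun 𝔛 f → (∃ b, ∀ a, S.lt (f a) b) →
    ∃ A ∈ F, ∀ x ∈ A, ∀ y ∈ A, f x = f y

/-- The standard system `SSy(M)`: standard parts of the `M`-coded sets. -/
def SSy : Set (Set ℕ) := {A | ∃ c : M, ∀ n : ℕ, (n ∈ A ↔ S.MemRel (S.num n) c)}

/-- `M` is nonstandard. -/
def Nonstd : Prop := ∃ a : M, ∀ n : ℕ, a ≠ S.num n

/-- `M` is recursively saturated: every recursive type (in the variable `0`, with
finitely many parameters assigned to the variables `1, …, k`) that is finitely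
realized in `M` is realized in `M`. -/
def RecSat : Prop :=
  ∀ (p : Set Fml) (k : ℕ) (par : ℕ → M),
    (∀ φ ∈ p, Fml.IsFO φ ∧ φ.freeN ⊆ Finset.range (k + 1)) →
    ComputablePred (fun n => ∃ φ ∈ p, Fml.code φ = n) →
    (∀ F : Finset Fml, ↑F ⊆ p →
      ∃ a : M, ∀ φ ∈ F, SatFO S (fun i => if i = 0 then a else par i) φ) →
    ∃ a : M, ∀ φ ∈ p, SatFO S (fun i => if i = 0 then a else par i) φ

/-- `c` is the least code of the (bounded) set `A`. -/
def IsLeastCode (A : Set M) (c : M) : Prop :=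
  (∀ x, S.MemRel x c ↔ x ∈ A) ∧ ∀ c', (∀ x, S.MemRel x c' ↔ x ∈ A) → S.le c c'

/-- `A* = {⟨A ∩ I_{<a}⟩ | a ∈ M}`, the set of least codes of initial segments of `A`. -/
def star (A : Set M) : Set M :=
  {c | ∃ a, S.IsLeastCode (A ∩ {b | S.lt b a}) c}

end AStr

/-! ### Filters and partial orders of sets -/

/-- A filter on a partial order `P` of sets, ordered by inclusion: a proper, nonempty,
upward closed, downward directed subset of `P`. -/
def IsFilterOn {α : Type} (P F : Set (Set α)) : Prop :=
  F ⊆ P ∧ F.Nonempty ∧ F ≠ P ∧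
  (∀ A ∈ F, ∀ B ∈ P, A ⊆ B → B ∈ F) ∧
  (∀ A ∈ F, ∀ B ∈ F, ∃ C ∈ F, C ⊆ A ∧ C ⊆ B)

/-- An ultrafilter on a partial order of sets: a maximal filter. -/
def IsUltraOn {α : Type} (P U : Set (Set α)) : Prop :=
  IsFilterOn P U ∧ ∀ F, IsFilterOn P F → U ⊆ F → F = U

/-- A principal filter on a partial order of sets. -/
def IsPrincipalOn {α : Type} (P U : Set (Set α)) : Prop :=
  ∃ A ∈ P, U = {B | B ∈ P ∧ A ⊆ B}

/-- The countable chain condition for a partial order `P` of sets (ordered by `⊆`):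
every uncountable subset contains two distinct compatible elements. -/
def CCCOn {α : Type} (P : Set (Set α)) : Prop :=
  ∀ A : Set (Set α), A ⊆ P → ¬A.Countable →
    ∃ X ∈ A, ∃ Y ∈ A, X ≠ Y ∧ ∃ Z ∈ P, Z ⊆ X ∧ Z ⊆ Y

/-- `𝔛` is a Boolean algebra of sets. -/
def IsBoolAlg {α : Type} (𝔛 : Set (Set α)) : Prop :=
  Set.univ ∈ 𝔛 ∧ ∅ ∈ 𝔛 ∧
  (∀ A ∈ 𝔛, ∀ B ∈ 𝔛, A ∪ B ∈ 𝔛) ∧ (∀ A ∈ 𝔛, ∀ B ∈ 𝔛, A ∩ B ∈ 𝔛) ∧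
  (∀ A ∈ 𝔛, Aᶜ ∈ 𝔛)

/-- A filter on the Boolean algebra `𝔛`. -/
def IsBAFilter {α : Type} (𝔛 F : Set (Set α)) : Prop :=
  F ⊆ 𝔛 ∧ F.Nonempty ∧ ∅ ∉ F ∧
  (∀ A ∈ F, ∀ B ∈ 𝔛, A ⊆ B → B ∈ F) ∧
  (∀ A ∈ F, ∀ B ∈ F, A ∩ B ∈ F)

/-- An ultrafilter on the Boolean algebra `𝔛`: a maximal filter. -/
def IsBAUltra {α : Type} (𝔛 F : Set (Set α)) : Prop :=
  IsBAFilter 𝔛 F ∧ ∀ G, IsBAFilter 𝔛 G → F ⊆ G → G = F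

/-! ### Scott sets -/

/-- Oracle partial recursive functions: partial recursive in the oracle `O`. -/
inductive RecursiveIn (O : ℕ →. ℕ) : (ℕ →. ℕ) → Prop
  | oracle : RecursiveIn O O
  | zero : RecursiveIn O (pure 0)
  | succ : RecursiveIn O Nat.succ
  | left : RecursiveIn O ↑fun n : ℕ => n.unpair.1
  | right : RecursiveIn O ↑fun n : ℕ => n.unpair.2
  | pair {f g} : RecursiveIn O f → RecursiveIn O g →
      RecursiveIn O fun n => Nat.pair <$> f n <*> g n
  | comp {f g} : RecursiveIn O f → RecursiveIn O g →
      RecursiveIn O fun n => g n >>= f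
  | prec {f g} : RecursiveIn O f → RecursiveIn O g →
      RecursiveIn O (Nat.unpaired fun a n =>
        n.rec (f a) fun y IH => do let i ← IH; g (Nat.pair a (Nat.pair y i)))
  | rfind {f} : RecursiveIn O f →
      RecursiveIn O fun a => Nat.rfind fun n => (fun m => m = 0) <$> f (Nat.pair a n)

/-- The characteristic function of a set of natural numbers. -/
noncomputable def chi (A : Set ℕ) : ℕ →. ℕ :=
  fun n => Part.some (@ite _ (n ∈ A) (Classical.propDecidable _) 1 0)

/-- Turing reducibility: `B ≤_T A`. -/
def TuringLe (B A : Set ℕ) : Prop := RecursiveIn (chi A) (chi B)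

/-- A set of naturals coding a binary tree (codes of finite binary strings,
closed under initial segments). -/
def IsTreeCode (T : Set ℕ) : Prop :=
  (∀ n ∈ T, ∃ l : List Bool, Encodable.encode l = n) ∧
  (∀ l₁ l₂ : List Bool, l₁ <+: l₂ → Encodable.encode l₂ ∈ T → Encodable.encode l₁ ∈ T)

/-- `B` (as the characteristic function of a branch) is an infinite branch of the
binary tree coded by `T`. -/
def IsBranchThrough (B T : Set ℕ) : Prop :=
  ∀ n : ℕ, ∃ l : List Bool, l.length = n ∧
    (∀ i : Fin l.length, (l.get i = true ↔ (i : ℕ) ∈ B)) ∧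
    Encodable.encode l ∈ T

/-- A Scott set: a nonempty Boolean algebra of subsets of `ω` closed under relative
recursion and containing an infinite branch of every infinite binary tree coded in it. -/
def IsScottSet (𝔛 : Set (Set ℕ)) : Prop :=
  𝔛.Nonempty ∧
  (∀ A ∈ 𝔛, ∀ B ∈ 𝔛, A ∪ B ∈ 𝔛) ∧
  (∀ A ∈ 𝔛, Aᶜ ∈ 𝔛) ∧
  (∀ A ∈ 𝔛, ∀ B : Set ℕ, TuringLe B A → B ∈ 𝔛) ∧
  (∀ T ∈ 𝔛, IsTreeCode T → T.Infinite → ∃ B ∈ 𝔛, IsBranchThrough B T)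

/-- The sets represented in the theory `T`. -/
def repSet (T : Set Fml) : Set (Set ℕ) :=
  {A | ∃ φ : Fml, Fml.IsFO φ ∧ φ.freeN ⊆ {0} ∧
    ∀ n : ℕ, (n ∈ A → Proves T (φ.substN 0 (numeral n))) ∧
      (n ∉ A → Proves T (Fml.not (φ.substN 0 (numeral n))))}

/-- Martin's axiom. -/
def MartinsAxiom : Prop :=
  ∀ (P : Type) (_ : PartialOrder P),
    (∀ A : Set P, ¬A.Countable → ∃ x ∈ A, ∃ y ∈ A, x ≠ y ∧ ∃ z, z ≤ x ∧ z ≤ y) →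
    ∀ 𝒟 : Set (Set P), (∀ D ∈ 𝒟, ∀ x : P, ∃ y ∈ D, y ≤ x) →
      Cardinal.mk 𝒟 < Cardinal.continuum →
      ∃ F : Set P, F.Nonempty ∧ (∀ x ∈ F, ∀ y, x ≤ y → y ∈ F) ∧
        (∀ x ∈ F, ∀ y ∈ F, ∃ z ∈ F, z ≤ x ∧ z ≤ y) ∧
        ∀ D ∈ 𝒟, (F ∩ D).Nonempty

namespace CCC

/-! ### Arithmetic in discretely ordered semirings -/

set_option linter.unusedSectionVars false

section Core

variable {M : Type} [CommSemiring M] [LinearOrder M] [IsStrictOrderedRing M]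
  [CanonicallyOrderedAdd M]

/-- A pairing function, monotone in both arguments. -/
def pr (a c : M) : M := (a + c) * (a + c) + a

/-- `c` codes a set agreeing with `A` below `a`. All quantifiers are bounded, so that this is
literally the meaning of a `Δ₀` formula. -/
def Agree (A : Set M) (a c : M) : Prop :=
  ∃ b, b < c + 1 ∧ ∃ d, d < c + 1 ∧ c = pr b d ∧
    ∀ i, i < a → (i ∈ A ↔ ∃ q, q < d + 1 ∧ d = q * (1 + (i + 1) * b))

/-- The pairs `⟨a, c⟩` with `c` the least code of a set agreeing with `A` below `a`. -/
def hat (A : Set M) : Set M :=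
  {n | ∃ a, a < n + 1 ∧ ∃ c, c < n + 1 ∧ n = pr a c ∧ Agree A a c ∧ ∀ e, e < c → ¬ Agree A a e}

theorem pr_mono {a a' c c' : M} (h : a ≤ a') (h' : c ≤ c') : pr a c ≤ pr a' c' := by
  unfold pr; gcongr

theorem le_mul_self (hd : ∀ a b : M, a < b + 1 ↔ a ≤ b) (s : M) : s ≤ s * s := by
  rcases eq_or_ne s 0 with rfl | h
  · simp
  · have h1 : 1 ≤ s := by
      by_contra hlt
      have : s < 0 + 1 := by simpa using hlt
      exact h (le_antisymm ((hd _ _).1 this) zero_le)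
    exact le_mul_of_one_le_left zero_le h1

theorem fst_le_pr (a c : M) : a ≤ pr a c := le_add_self

theorem snd_le_pr (hd : ∀ a b : M, a < b + 1 ↔ a ≤ b) (a c : M) : c ≤ pr a c :=
  calc c ≤ a + c := le_add_self
    _ ≤ (a + c) * (a + c) := le_mul_self hd _
    _ ≤ pr a c := le_self_add

theorem pr_sum_le (hd : ∀ a b : M, a < b + 1 ↔ a ≤ b) {a c a' c' : M} (h : pr a c = pr a' c') :
    a' + c' ≤ a + c := by
  by_contra hlt
  have hlt := not_le.1 hlt
  have h1 : a + c + 1 ≤ a' + c' := by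
    by_contra h2
    exact absurd ((hd _ _).1 (not_le.1 h2)) (not_le.2 hlt)
  have h3 : (a + c + 1) * (a + c + 1) ≤ pr a' c' :=
    (mul_le_mul' h1 h1).trans le_self_add
  have h4 : (a + c + 1) * (a + c + 1) = pr a c + (a + c + c + 1) := by unfold pr; ring
  rw [h4, ← h] at h3
  have h5 : pr a c + (a + c + c) < pr a c + (a + c + c) + 1 := lt_add_one _
  have h6 : pr a c ≤ pr a c + (a + c + c) := le_self_add
  rw [← add_assoc] at h3
  exact absurd (h6.trans_lt h5) (not_lt.2 h3)

theorem pr_inj (hd : ∀ a b : M, a < b + 1 ↔ a ≤ b) {a c a' c' : M} (h : pr a c = pr a' c') :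
    a = a' ∧ c = c' := by
  have hs : a + c = a' + c' := le_antisymm (pr_sum_le hd h.symm) (pr_sum_le hd h)
  unfold pr at h
  rw [hs] at h
  have ha : a = a' := add_left_cancel h
  subst ha
  exact ⟨rfl, add_left_cancel hs⟩

theorem bdvd_iff (hd : ∀ a b : M, a < b + 1 ↔ a ≤ b) (d m : M) (hm : 1 ≤ m) :
    (∃ q, q < d + 1 ∧ d = q * m) ↔ m ∣ d := by
  constructor
  · rintro ⟨q, -, h⟩; exact ⟨q, by rw [h, mul_comm]⟩
  · rintro ⟨q, h⟩
    refine ⟨q, (hd _ _).2 ?_, by rw [h, mul_comm]⟩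
    rw [h]; exact le_mul_of_one_le_left zero_le hm

theorem dvd_of_dvd_add {m x y : M} (hm : 0 < m) (h1 : m ∣ x) (h2 : m ∣ x + y) : m ∣ y := by
  obtain ⟨p, rfl⟩ := h1
  obtain ⟨q, hq⟩ := h2
  have : p ≤ q := by
    have : m * p ≤ m * q := by rw [← hq]; exact le_self_add
    exact le_of_mul_le_mul_left this hm
  obtain ⟨r, rfl⟩ := exists_add_of_le this
  refine ⟨r, ?_⟩
  rw [mul_add] at hq
  exact add_left_cancel hq

/-- The modulus `1 + (i + 1) b` of the coding. -/
def md (b i : M) : M := 1 + (i + 1) * b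

theorem one_le_md (b i : M) : 1 ≤ md b i := le_self_add

theorem md_pos (b i : M) : 0 < md b i := zero_lt_one.trans_le (one_le_md b i)

/-- Euclid's lemma for two different moduli. With `j = i + e` or `i = j + e`, and `b = e k`, the
subtraction-free identities below express `1` as a combination of the two moduli. -/
theorem dvd_step {b i j d : M} (hij : i ≠ j)
    (hb : ∀ e, e ≠ 0 → (e ≤ i ∨ e ≤ j) → e ∣ b) (h : md b i ∣ d * md b j) : md b i ∣ d := by
  rcases le_total i j with hle | hle
  · obtain ⟨e, rfl⟩ := exists_add_of_le hle
    have he : e ≠ 0 := by rintro rfl; simp at hij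
    obtain ⟨k, hk⟩ := hb e he (Or.inr le_add_self)
    have key : d * md b i + (i + 1) * (i + 1) * k * (d * md b (i + e))
        = md b i * (d * ((i + 1) * k * (i + e + 1))) + d := by
      unfold md; rw [hk]; ring
    have : md b i ∣ md b i * (d * ((i + 1) * k * (i + e + 1))) + d := by
      rw [← key]
      exact dvd_add (Dvd.intro_left _ rfl) (h.mul_left _)
    exact dvd_of_dvd_add (md_pos b i) (Dvd.intro _ rfl) this
  · obtain ⟨e, rfl⟩ := exists_add_of_le hle
    have he : e ≠ 0 := by rintro rfl; simp at hij
    obtain ⟨k, hk⟩ := hb e he (Or.inl le_add_self)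
    have key : (j + e + 1) * (j + e + 1) * k * (d * md b j) + d
        = md b (j + e) * (d * (1 + (j + e + 1) * k * (j + 1))) := by
      unfold md; rw [hk]; ring
    have : md b (j + e) ∣ (j + e + 1) * (j + e + 1) * k * (d * md b j) + d := by
      rw [key]
      exact Dvd.intro _ rfl
    exact dvd_of_dvd_add (md_pos b _) (h.mul_left _) this

/-! ### Almost disjoint sets from initial segments -/

theorem agree_mono {A : Set M} {a a' c : M} (h : a ≤ a') (hA : Agree A a' c) : Agree A a c := by
  obtain ⟨b, hb, d, hd, hc, hi⟩ := hA
  exact ⟨b, hb, d, hd, hc, fun i hia => hi i (hia.trans_le h)⟩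

/-- The induction principle for a predicate on `M`. -/
def Ind (P : M → Prop) : Prop := P 0 → (∀ a, P a → P (a + 1)) → ∀ a, P a

theorem exists_common_multiple (hd : ∀ a b : M, a < b + 1 ↔ a ≤ b)
    (ind : Ind fun a : M => ∃ b, 0 < b ∧ ∀ i, i < a → ∃ q, q < b + 1 ∧ b = q * (i + 1)) (a : M) :
    ∃ b : M, 0 < b ∧ ∀ i, i < a → (i + 1) ∣ b := by
  have main : ∃ b : M, 0 < b ∧ ∀ i, i < a → ∃ q, q < b + 1 ∧ b = q * (i + 1) := by
    refine ind ⟨1, zero_lt_one, fun i hi => absurd hi (not_lt.2 zero_le)⟩ ?_ a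
    rintro a ⟨b, hb, h⟩
    refine ⟨b * (a + 1), mul_pos hb (lt_of_le_of_lt zero_le (lt_add_one a)), fun i hi => ?_⟩
    rw [bdvd_iff hd _ _ le_add_self]
    rcases ((hd _ _).1 hi).eq_or_lt with rfl | hlt
    · exact Dvd.intro_left _ rfl
    · exact ((bdvd_iff hd _ _ le_add_self).1 (h i hlt)).mul_right _
  obtain ⟨b, hb, h⟩ := main
  exact ⟨b, hb, fun i hi => (bdvd_iff hd _ _ le_add_self).1 (h i hi)⟩

theorem exists_agree (hd : ∀ a b : M, a < b + 1 ↔ a ≤ b)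
    (ind1 : Ind fun a : M => ∃ b, 0 < b ∧ ∀ i, i < a → ∃ q, q < b + 1 ∧ b = q * (i + 1))
    (A : Set M) (a : M)
    (ind2 : ∀ b : M, Ind fun j => ∃ d, ∀ i, i < a →
      ((∃ q, q < d + 1 ∧ d = q * (1 + (i + 1) * b)) ↔ (i < j ∧ i ∈ A))) :
    ∃ c, Agree A a c := by
  obtain ⟨b, hb0, hb⟩ := exists_common_multiple hd ind1 a
  have hbe : ∀ e, e ≠ 0 → e ≤ a → e ∣ b := by
    intro e he hea
    have h1 : 1 ≤ e := by
      by_contra hlt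
      have : e < 0 + 1 := by simpa using hlt
      exact he (le_antisymm ((hd _ _).1 this) zero_le)
    obtain ⟨f, rfl⟩ := exists_add_of_le h1
    rw [add_comm] at hea ⊢
    exact hb f ((lt_add_one f).trans_le hea)
  have main := ind2 b ?_ ?_ a
  · obtain ⟨d, hdd⟩ := main
    refine ⟨pr b d, b, (hd _ _).2 (fst_le_pr b d), d, (hd _ _).2 (snd_le_pr hd b d), rfl, ?_⟩
    intro i hi
    rw [hdd i hi]
    simp [hi]
  · refine ⟨1, fun i _ => ?_⟩
    rw [bdvd_iff hd _ _ le_self_add]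
    constructor
    · rintro ⟨p, hp⟩
      exfalso
      have hp0 : p ≠ 0 := by rintro rfl; simp at hp
      have hppos : 0 < p := lt_of_le_of_ne zero_le hp0.symm
      have h1 : (0 : M) < (i + 1) * b :=
        mul_pos (lt_of_le_of_lt zero_le (lt_add_one i)) hb0
      have hp1 : 1 ≤ p := by
        by_contra hlt
        have : p < 0 + 1 := by simpa using hlt
        exact hp0 (le_antisymm ((hd _ _).1 this) zero_le)
      have h2 : 1 + (i + 1) * b ≤ 1 := by
        conv_rhs => rw [hp]
        exact le_mul_of_one_le_right zero_le hp1
      exact absurd (lt_add_of_pos_right 1 h1) (not_lt.2 h2)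
    · rintro ⟨h, -⟩
      exact absurd h (not_lt.2 zero_le)
  · rintro j ⟨d, hdd⟩
    by_cases hj : j < a ∧ j ∈ A
    · obtain ⟨hja, hjA⟩ := hj
      refine ⟨d * md b j, fun i hi => ?_⟩
      have := hdd i hi
      rw [bdvd_iff hd _ _ le_self_add] at this ⊢
      by_cases hij : i = j
      · subst hij
        refine iff_of_true (Dvd.intro_left _ rfl) ⟨lt_add_one i, hjA⟩
      · have hlt : i < j + 1 ↔ i < j := by
          rw [hd, le_iff_lt_or_eq]; simp [hij]
        rw [hlt, ← this]
        refine ⟨fun h => dvd_step hij ?_ h, fun h => h.mul_right _⟩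
        intro e he hle
        refine hbe e he ?_
        rcases hle with h | h
        · exact h.trans hi.le
        · exact h.trans hja.le
    · refine ⟨d, fun i hi => ?_⟩
      rw [hdd i hi, hd, le_iff_lt_or_eq]
      constructor
      · rintro ⟨h1, h2⟩; exact ⟨Or.inl h1, h2⟩
      · rintro ⟨h1 | rfl, h2⟩
        · exact ⟨h1, h2⟩
        · exact absurd ⟨hi, h2⟩ hj

theorem exists_least (hd : ∀ a b : M, a < b + 1 ↔ a ≤ b) (P : M → Prop)
    (ind : Ind fun k => ∀ c, c < k → ¬ P c) (h : ∃ c, P c) :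
    ∃ c, P c ∧ ∀ e, e < c → ¬ P e := by
  by_contra hno
  push Not at hno
  obtain ⟨c, hc⟩ := h
  refine ind (fun c hc => absurd hc (not_lt.2 zero_le)) ?_ (c + 1) c (lt_add_one c) hc
  intro k hk e he hPe
  obtain ⟨f, hf, hPf⟩ := hno e hPe
  exact hk f (hf.trans_le ((hd _ _).1 he)) hPf

theorem hat_unb (hd : ∀ a b : M, a < b + 1 ↔ a ≤ b) (A : Set M)
    (h : ∀ a, ∃ c, Agree A a c ∧ ∀ e, e < c → ¬ Agree A a e) (b : M) : ∃ n ∈ hat A, b < n := by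
  obtain ⟨c, hc, hl⟩ := h (b + 1)
  exact ⟨pr (b + 1) c, ⟨b + 1, (hd _ _).2 (fst_le_pr _ _), c, (hd _ _).2 (snd_le_pr hd _ _),
    rfl, hc, hl⟩, (lt_add_one b).trans_le (fst_le_pr _ _)⟩

theorem hat_inter_bdd (hd : ∀ a b : M, a < b + 1 ↔ a ≤ b) {A B : Set M} (hAB : A ≠ B)
    (h : ∀ a, ∃ c, Agree A a c) : ∃ N, ∀ n, n ∈ hat A → n ∈ hat B → n ≤ N := by
  obtain ⟨x, hx⟩ : ∃ x, ¬ (x ∈ A ↔ x ∈ B) := by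
    by_contra hno
    push Not at hno
    exact hAB (Set.ext hno)
  obtain ⟨C, hC⟩ := h (x + 1)
  refine ⟨pr x C, ?_⟩
  rintro n ⟨a, -, c, -, rfl, hA, hmin⟩ ⟨a', -, c', -, hn, hB, -⟩
  obtain ⟨rfl, rfl⟩ := pr_inj hd hn
  have hax : a ≤ x := by
    by_contra hlt
    have hlt := not_le.1 hlt
    obtain ⟨b, -, d, -, rfl, hi⟩ := hA
    obtain ⟨b', -, d', -, hp, hi'⟩ := hB
    obtain ⟨rfl, rfl⟩ := pr_inj hd hp
    exact hx ((hi x hlt).trans (hi' x hlt).symm)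
  refine pr_mono hax ?_
  by_contra hlt
  exact hmin C (not_le.1 hlt) (agree_mono (hax.trans (lt_add_one x).le) hC)

end Core

/-! ### Models of the basic axioms as ordered semirings -/

/-- The commutative semiring underlying a model of `PA⁻`. -/
abbrev semiringOf {M : Type} (S : AStr M) (h : PAminusSem S) : CommSemiring M :=
  letI : Zero M := ⟨S.zero⟩
  letI : One M := ⟨S.one⟩
  letI : Add M := ⟨S.add⟩
  letI : Mul M := ⟨S.mul⟩
  { zero := S.zero
    one := S.one
    add := S.add
    mul := S.mul
    add_assoc := fun a b c => (h.1 a b c).symm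
    add_comm := h.2.1
    zero_add := fun a => (h.2.1 _ _).trans (h.2.2.2.2.2.1 a)
    add_zero := h.2.2.2.2.2.1
    mul_assoc := fun a b c => (h.2.2.1 a b c).symm
    mul_comm := h.2.2.2.1
    left_distrib := h.2.2.2.2.1
    right_distrib := fun a b c => by
      have h1 := h.2.2.2.2.1 c a b
      have hc := h.2.2.2.1
      rw [hc c, hc c a, hc c b] at h1
      exact h1
    zero_mul := fun a => (h.2.2.2.1 _ _).trans (h.2.2.2.2.2.2.1 a)
    mul_zero := h.2.2.2.2.2.2.1
    one_mul := fun a => (h.2.2.2.1 _ _).trans (h.2.2.2.2.2.2.2.1 a)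
    mul_one := h.2.2.2.2.2.2.2.1
    nsmul := nsmulRec }

open Classical in
/-- The linear order of a model of `PA⁻`. -/
noncomputable abbrev orderOf {M : Type} (S : AStr M) (h : PAminusSem S) : LinearOrder M where
  le := S.le
  lt := S.lt
  le_refl a := Or.inr rfl
  le_trans a b c h1 h2 := by
    obtain ⟨-, -, -, -, -, -, -, -, tr, -⟩ := h
    rcases h1 with h1 | rfl
    · rcases h2 with h2 | rfl
      · exact Or.inl (tr _ _ _ h1 h2)
      · exact Or.inl h1
    · exact h2
  lt_iff_le_not_ge a b := by
    obtain ⟨-, -, -, -, -, -, -, -, tr, irr, -⟩ := h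
    constructor
    · intro hab
      refine ⟨Or.inl hab, ?_⟩
      rintro (hba | rfl)
      · exact irr _ (tr _ _ _ hab hba)
      · exact irr _ hab
    · rintro ⟨hab | rfl, hn⟩
      · exact hab
      · exact absurd (Or.inr rfl) hn
  le_antisymm a b h1 h2 := by
    obtain ⟨-, -, -, -, -, -, -, -, tr, irr, -⟩ := h
    rcases h1 with h1 | rfl
    · rcases h2 with h2 | rfl
      · exact absurd (tr _ _ _ h1 h2) (irr _)
      · rfl
    · rfl
  le_total a b := by
    obtain ⟨-, -, -, -, -, -, -, -, -, -, tri, -⟩ := h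
    rcases tri a b with h | h | h
    · exact Or.inl (Or.inl h)
    · exact Or.inl (Or.inr h)
    · exact Or.inr (Or.inl h)
  toDecidableLE := Classical.decRel _

theorem strictOrdered {M : Type} (S : AStr M) (h : PAminusSem S) :
    letI := semiringOf S h
    letI := orderOf S h
    IsStrictOrderedRing M := by
  let _ := semiringOf S h
  let _ := orderOf S h
  obtain ⟨-, -, -, -, -, -, -, -, -, -, -, addlt, mullt, -, h01, -⟩ := id h
  have addlt' : ∀ a b c : M, a < b → a + c < b + c := addlt
  have mullt' : ∀ a b c : M, 0 < c → a < b → a * c < b * c := mullt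
  have h01' : (0 : M) < 1 := h01
  have addle : ∀ a b : M, a ≤ b → ∀ c, a + c ≤ b + c := by
    intro a b hab c
    rcases hab.eq_or_lt with rfl | hlt
    · exact le_rfl
    · exact (addlt' _ _ c hlt).le
  refine { add_le_add_left := ?_, le_of_add_le_add_left := ?_, zero_le_one := h01'.le,
           exists_pair_ne := ⟨0, 1, h01'.ne⟩, mul_lt_mul_of_pos_left := ?_,
           mul_lt_mul_of_pos_right := ?_ }
  · exact addle
  · intro a b c hle
    by_contra hlt
    have := addlt' _ _ a (not_le.1 hlt)
    rw [add_comm c, add_comm b] at this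
    exact absurd hle (not_le.2 this)
  · intro a ha b c hbc
    show a * b < a * c
    rw [mul_comm a, mul_comm a]
    exact mullt' _ _ _ ha hbc
  · intro a ha b c hbc
    exact mullt' _ _ _ ha hbc

theorem canonicallyOrdered {M : Type} (S : AStr M) (h : PAminusSem S) :
    letI := semiringOf S h
    letI := orderOf S h
    CanonicallyOrderedAdd M := by
  let _ := semiringOf S h
  let _ := orderOf S h
  have := strictOrdered S h
  obtain ⟨-, -, -, -, -, -, -, -, -, -, -, -, -, ex, -, -, pos⟩ := id h
  have ex' : ∀ a b : M, a < b → ∃ c, a + c = b := ex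
  have pos' : ∀ a : M, 0 ≤ a := by
    intro a
    rcases pos a with h | h
    · exact Or.inr h.symm
    · exact Or.inl h
  refine { exists_add_of_le := ?_, le_self_add := ?_, le_add_self := ?_ }
  · intro a b hab
    rcases hab.eq_or_lt with rfl | hlt
    · exact ⟨0, (add_zero _).symm⟩
    · obtain ⟨c, hc⟩ := ex' _ _ hlt
      exact ⟨c, hc.symm⟩
  · intro a b; exact le_add_of_nonneg_left (pos' b)
  · intro a b; exact le_add_of_nonneg_right (pos' b)

theorem discrete {M : Type} (S : AStr M) (h : PAminusSem S) :
    letI := semiringOf S h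
    letI := orderOf S h
    ∀ a b : M, a < b + 1 ↔ a ≤ b := by
  let _ := semiringOf S h
  let _ := orderOf S h
  have := strictOrdered S h
  have := canonicallyOrdered S h
  obtain ⟨-, -, -, -, -, -, -, -, -, -, -, -, -, -, -, disc, -⟩ := id h
  have disc' : ∀ a : M, 0 < a → a = 1 ∨ 1 < a := disc
  intro a b
  constructor
  · intro hab
    by_contra hlt
    obtain ⟨c, rfl⟩ := exists_add_of_le (not_le.1 hlt).le
    have hc : 0 < c := by
      rw [pos_iff_ne_zero]
      rintro rfl
      simp at hlt
    have h1 : 1 ≤ c := by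
      rcases disc' c hc with rfl | h
      · exact le_rfl
      · exact h.le
    exact absurd hab (not_lt.2 (by gcongr))
  · intro hab
    exact hab.trans_lt (lt_add_one b)

/-! ### The formulas -/

/-- The bounded existential quantifier `∃ x < t, φ`. -/
def bex (x : ℕ) (t : PTerm) (φ : Fml) : Fml := .not (.all x (.imp (.lt (.var x) t) (.not φ)))

/-- The bounded universal quantifier `∀ x < t, φ`. -/
def ball (x : ℕ) (t : PTerm) (φ : Fml) : Fml := .all x (.imp (.lt (.var x) t) φ)

theorem isDelta0_bex {x : ℕ} {t : PTerm} {φ : Fml} (h : x ∉ t.vars) (hφ : IsDelta0 φ) :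
    IsDelta0 (bex x t φ) := .not (.ball _ _ h (.not hφ))

theorem isDelta0_ball {x : ℕ} {t : PTerm} {φ : Fml} (h : x ∉ t.vars) (hφ : IsDelta0 φ) :
    IsDelta0 (ball x t φ) := .ball _ _ h hφ

theorem isDelta0_and {φ ψ : Fml} (hφ : IsDelta0 φ) (hψ : IsDelta0 ψ) : IsDelta0 (φ.and ψ) :=
  .not (.imp hφ (.not hψ))

theorem isDelta0_iff {φ ψ : Fml} (hφ : IsDelta0 φ) (hψ : IsDelta0 ψ) : IsDelta0 (φ.iff ψ) :=
  isDelta0_and (.imp hφ hψ) (.imp hψ hφ)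

section Sat

variable {M : Type} (S : AStr M) (𝔛 : Set (Set M)) (v : ℕ → M) (w : ℕ → Set M)

theorem sat_eq (t u : PTerm) : Sat S 𝔛 v w (.eq t u) ↔ t.val S v = u.val S v := Iff.rfl

theorem sat_lt (t u : PTerm) : Sat S 𝔛 v w (.lt t u) ↔ S.lt (t.val S v) (u.val S v) := Iff.rfl

theorem sat_mem (t : PTerm) (k : ℕ) : Sat S 𝔛 v w (.mem t k) ↔ t.val S v ∈ w k := Iff.rfl

theorem sat_not (φ : Fml) : Sat S 𝔛 v w (.not φ) ↔ ¬ Sat S 𝔛 v w φ := Iff.rfl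

theorem sat_all (x : ℕ) (φ : Fml) :
    Sat S 𝔛 v w (.all x φ) ↔ ∀ a, Sat S 𝔛 (Function.update v x a) w φ := Iff.rfl

theorem sat_and (φ ψ : Fml) : Sat S 𝔛 v w (φ.and ψ) ↔ Sat S 𝔛 v w φ ∧ Sat S 𝔛 v w ψ := by
  simp [Fml.and, Sat]

theorem sat_iff (φ ψ : Fml) : Sat S 𝔛 v w (φ.iff ψ) ↔ (Sat S 𝔛 v w φ ↔ Sat S 𝔛 v w ψ) := by
  rw [Fml.iff, sat_and]; exact iff_iff_implies_and_implies.symm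

theorem sat_ex (x : ℕ) (φ : Fml) :
    Sat S 𝔛 v w (Fml.ex x φ) ↔ ∃ a, Sat S 𝔛 (Function.update v x a) w φ := by
  simp [Fml.ex, Sat]

theorem sat_bex (x : ℕ) (t : PTerm) (φ : Fml) :
    Sat S 𝔛 v w (bex x t φ) ↔ ∃ a, S.lt a (t.val S (Function.update v x a)) ∧
      Sat S 𝔛 (Function.update v x a) w φ := by
  simp [bex, Sat, PTerm.val]

theorem sat_ball (x : ℕ) (t : PTerm) (φ : Fml) :
    Sat S 𝔛 v w (ball x t φ) ↔ ∀ a, S.lt a (t.val S (Function.update v x a)) →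
      Sat S 𝔛 (Function.update v x a) w φ := by
  simp [ball, Sat, PTerm.val]

end Sat

/-- The term `t + 1`. -/
def tS (t : PTerm) : PTerm := .add t .one

/-- The formula `n = pr a c`. -/
def prF (n a c : PTerm) : Fml := .eq n (.add (.mul (.add a c) (.add a c)) a)

/-- The formula `∃ q < d + 1, d = q * m`, with variable `x` for `q`. -/
def dvdF (x : ℕ) (d m : PTerm) : Fml := bex x (tS d) (.eq d (.mul (.var x) m))

/-- The term `1 + (i + 1) b`. -/
def mdT (b i : PTerm) : PTerm := .add .one (.mul (.add i .one) b)

/-- The matrix saying that `x₁ > 0` is a common multiple of `1, …, x₀`. -/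
def multF : Fml :=
  .and (.lt .zero (.var 1)) (ball 2 (.var 0) (dvdF 3 (.var 1) (.add (.var 2) .one)))

/-- The matrix saying that `x₁` codes, with base `x₃` and below `x₂`, the set `X₀ ∩ [0, x₀)`. -/
def stepF : Fml :=
  ball 4 (.var 2) (.iff (dvdF 5 (.var 1) (mdT (.var 3) (.var 4)))
    (.and (.lt (.var 4) (.var 0)) (.mem (.var 4) 0)))

/-- The `Δ₀` formula `Agree X₀ x₁ xₖ`. It binds the variables `10, …, 13`, so `k < 10`. -/
def agreeF (k : ℕ) : Fml :=
  bex 10 (tS (.var k)) (bex 11 (tS (.var k)) (.and (prF (.var k) (.var 10) (.var 11))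
    (ball 12 (.var 1) (.iff (.mem (.var 12) 0)
      (dvdF 13 (.var 11) (mdT (.var 10) (.var 12)))))))

/-- No element below `x₀` satisfies `Agree X₀ x₁`. -/
def leastF : Fml := ball 2 (.var 0) (.not (agreeF 2))

/-- The `Δ₀` formula `x₀ ∈ hat X₀`. -/
def hatF : Fml :=
  bex 1 (tS (.var 0)) (bex 2 (tS (.var 0)) (.and (prF (.var 0) (.var 1) (.var 2))
    (.and (agreeF 2) (ball 3 (.var 2) (.not (agreeF 3))))))

theorem isDelta0_dvdF {x : ℕ} {d m : PTerm} (h : x ∉ d.vars) : IsDelta0 (dvdF x d m) :=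
  isDelta0_bex (by simpa [tS, PTerm.vars] using h) (.eq _ _)

theorem isDelta0_multF : IsDelta0 multF :=
  isDelta0_and (.lt _ _) (isDelta0_ball (by simp [PTerm.vars])
    (isDelta0_dvdF (by simp [PTerm.vars])))

theorem isDelta0_stepF : IsDelta0 stepF :=
  isDelta0_ball (by simp [PTerm.vars]) (isDelta0_iff (isDelta0_dvdF (by simp [PTerm.vars]))
    (isDelta0_and (.lt _ _) (.mem _ _)))

theorem isDelta0_agreeF {k : ℕ} (hk : k < 10) : IsDelta0 (agreeF k) := by
  refine isDelta0_bex ?_ (isDelta0_bex ?_ (isDelta0_and (.eq _ _) (isDelta0_ball ?_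
    (isDelta0_iff (.mem _ _) (isDelta0_dvdF ?_)))))
  all_goals simp [PTerm.vars, tS]
  all_goals omega

theorem isDelta0_leastF : IsDelta0 leastF :=
  isDelta0_ball (by simp [PTerm.vars]) (.not (isDelta0_agreeF (by norm_num)))

theorem isDelta0_hatF : IsDelta0 hatF :=
  isDelta0_bex (by simp [tS, PTerm.vars]) (isDelta0_bex (by simp [tS, PTerm.vars])
    (isDelta0_and (.eq _ _) (isDelta0_and (isDelta0_agreeF (by norm_num))
      (isDelta0_ball (by simp [PTerm.vars]) (.not (isDelta0_agreeF (by norm_num)))))))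

/-! ### Semantics of the formulas -/

section Sem

variable {M : Type} (S : AStr M) (𝔛 : Set (Set M)) (h : PAminusSem S)

theorem sat_multF (v : ℕ → M) (w : ℕ → Set M) :
    letI := semiringOf S h
    letI := orderOf S h
    Sat S 𝔛 v w multF ↔
      0 < v 1 ∧ ∀ i, i < v 0 → ∃ q, q < v 1 + 1 ∧ v 1 = q * (i + 1) := by
  simp [multF, sat_and, sat_ball, sat_bex, dvdF, tS, sat_lt, sat_eq, PTerm.val]
  exact Iff.rfl

theorem sat_stepF (v : ℕ → M) (w : ℕ → Set M) :
    letI := semiringOf S h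
    letI := orderOf S h
    Sat S 𝔛 v w stepF ↔ ∀ i, i < v 2 →
      ((∃ q, q < v 1 + 1 ∧ v 1 = q * (1 + (i + 1) * v 3)) ↔ (i < v 0 ∧ i ∈ w 0)) := by
  simp [stepF, sat_and, sat_iff, sat_mem, sat_ball, sat_bex, dvdF, mdT, tS, sat_lt, sat_eq,
    PTerm.val]
  exact Iff.rfl

theorem sat_agreeF (v : ℕ → M) (w : ℕ → Set M) {k : ℕ} (hk : k < 10) :
    letI := semiringOf S h
    letI := orderOf S h
    Sat S 𝔛 v w (agreeF k) ↔ Agree (w 0) (v 1) (v k) := by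
  have h1 : k ≠ 10 := by omega
  have h2 : k ≠ 11 := by omega
  simp [agreeF, prF, sat_and, sat_iff, sat_mem, sat_ball, sat_bex, dvdF, mdT, tS,
    sat_eq, PTerm.val, Function.update_of_ne h1, Function.update_of_ne h2]
  exact Iff.rfl

theorem sat_leastF (v : ℕ → M) (w : ℕ → Set M) :
    letI := semiringOf S h
    letI := orderOf S h
    Sat S 𝔛 v w leastF ↔ ∀ c, c < v 0 → ¬ Agree (w 0) (v 1) c := by
  simp [leastF, sat_ball, sat_not, PTerm.val, sat_agreeF S 𝔛 h]
  exact Iff.rfl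

theorem sat_hatF (v : ℕ → M) (w : ℕ → Set M) :
    letI := semiringOf S h
    letI := orderOf S h
    Sat S 𝔛 v w hatF ↔ v 0 ∈ hat (w 0) := by
  simp [hatF, prF, sat_and, sat_ball, sat_bex, sat_not, sat_eq, tS, PTerm.val,
    sat_agreeF S 𝔛 h]
  exact Iff.rfl

/-! ### Consequences of `RCA₀` -/

theorem ind_of (hR : SatRCA0 S 𝔛) {φ : Fml} (hφ : IsSigma01 φ) (v : ℕ → M) {A : Set M}
    (hA : A ∈ 𝔛) {P : M → Prop}
    (hP : ∀ a, Sat S 𝔛 (Function.update v 0 a) (fun _ => A) φ ↔ P a) :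
    letI := semiringOf S h
    Ind P := by
  intro h0 hs a
  exact (hP a).1 (hR.2.1 φ 0 hφ v (fun _ => A) (fun _ => hA)
    ⟨(hP _).2 h0, fun b hb => (hP _).2 (hs b ((hP b).1 hb))⟩ a)

theorem ind_mult {A : Set M} (hA : A ∈ 𝔛) (hR : SatRCA0 S 𝔛) :
    letI := semiringOf S h
    letI := orderOf S h
    Ind fun a : M => ∃ b, 0 < b ∧ ∀ i, i < a → ∃ q, q < b + 1 ∧ b = q * (i + 1) := by
  refine ind_of S 𝔛 h hR (φ := Fml.ex 1 multF) ⟨1, multF, isDelta0_multF, rfl⟩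
    (fun _ => S.zero) hA fun a => ?_
  simp [sat_ex, sat_multF S 𝔛 h]

theorem ind_step {A : Set M} (hA : A ∈ 𝔛) (hR : SatRCA0 S 𝔛) (a b : M) :
    letI := semiringOf S h
    letI := orderOf S h
    Ind fun j => ∃ d, ∀ i, i < a →
      ((∃ q, q < d + 1 ∧ d = q * (1 + (i + 1) * b)) ↔ (i < j ∧ i ∈ A)) := by
  refine ind_of S 𝔛 h hR (φ := Fml.ex 1 stepF) ⟨1, stepF, isDelta0_stepF, rfl⟩
    (Function.update (fun _ => a) 3 b) hA fun j => ?_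
  simp [sat_ex, sat_stepF S 𝔛 h]

/-- The induction formula is `Δ₀`; the dummy quantifier `∃ x₂₀` makes it `Σ₁`. -/
theorem ind_least {A : Set M} (hA : A ∈ 𝔛) (hR : SatRCA0 S 𝔛) (a : M) :
    letI := semiringOf S h
    letI := orderOf S h
    Ind fun k => ∀ c, c < k → ¬ Agree A a c := by
  refine ind_of S 𝔛 h hR (φ := Fml.ex 20 leastF) ⟨20, leastF, isDelta0_leastF, rfl⟩
    (fun _ => a) hA fun k => ?_
  have : Nonempty M := ⟨a⟩
  simp [sat_ex, sat_leastF S 𝔛 h]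

/-- The defining formula is `Δ₀`; dummy quantifiers over `x₂₀` give its `Σ₁` and `Π₁` forms. -/
theorem hat_mem {A : Set M} (hA : A ∈ 𝔛) (hR : SatRCA0 S 𝔛) :
    letI := semiringOf S h
    letI := orderOf S h
    hat A ∈ 𝔛 := by
  let _ := semiringOf S h
  let _ := orderOf S h
  have : Nonempty M := ⟨S.zero⟩
  have hs : ∀ a, Sat S 𝔛 (Function.update (fun _ => S.zero) 0 a) (fun _ => A) (Fml.ex 20 hatF) ↔
      a ∈ hat A := fun a => by simp [sat_ex, sat_hatF S 𝔛 h]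
  have hp : ∀ a, Sat S 𝔛 (Function.update (fun _ => S.zero) 0 a) (fun _ => A) (Fml.all 20 hatF) ↔
      a ∈ hat A := fun a => by simp [sat_all, sat_hatF S 𝔛 h]
  have key := hR.2.2 (Fml.ex 20 hatF) (Fml.all 20 hatF) 0 ⟨20, hatF, isDelta0_hatF, rfl⟩
    ⟨20, hatF, isDelta0_hatF, rfl⟩ (fun _ => S.zero) (fun _ => A) (fun _ => hA)
    fun a => (hs a).trans (hp a).symm
  rwa [show {a | Sat S 𝔛 (Function.update (fun _ => S.zero) 0 a) (fun _ => A) (Fml.ex 20 hatF)} =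
    hat A from Set.ext hs] at key

end Sem

end CCC

open CCC in
/-- Hamkins–Gitman. If `(M,𝔛) ⊨ RCA₀` and `P_𝔛` has the countable
chain condition, then `𝔛` is countable. -/
theorem ccc_implies_countable
    {M : Type} (S : AStr M) (𝔛 : Set (Set M))
    (hRCA : SatRCA0 S 𝔛)
    (hccc : CCCOn (S.PX 𝔛)) :
    𝔛.Countable := by
  have h := hRCA.1
  let _ := semiringOf S h
  let _ := orderOf S h
  have := strictOrdered S h
  have := canonicallyOrdered S h
  have hd : ∀ a b : M, a < b + 1 ↔ a ≤ b := discrete S h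
  have hag : ∀ A ∈ 𝔛, ∀ a, ∃ c, Agree A a c := fun A hA a =>
    exists_agree hd (ind_mult S 𝔛 h hA hRCA) A a (fun b => ind_step S 𝔛 h hA hRCA a b)
  have hunb : ∀ A ∈ 𝔛, ∀ b, ∃ n ∈ hat A, b < n := fun A hA =>
    hat_unb hd A fun a => exists_least hd _ (ind_least S 𝔛 h hA hRCA a) (hag A hA a)
  -- Used with `Z = hat A` for injectivity, and with `Z` a common lower bound for incompatibility.
  have hdisj : ∀ A ∈ 𝔛, ∀ B ∈ 𝔛, A ≠ B → ∀ Z : Set M, (∀ b, ∃ n ∈ Z, b < n) →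
      Z ⊆ hat A → ¬ Z ⊆ hat B := by
    intro A hA B _ hAB Z hZ h1 h2
    obtain ⟨N, hN⟩ := hat_inter_bdd hd hAB (hag A hA)
    obtain ⟨n, hn, hlt⟩ := hZ N
    exact absurd (hN n (h1 hn) (h2 hn)) (not_le.2 hlt)
  have hinj : Set.InjOn (hat : Set M → Set M) 𝔛 := by
    intro A hA B hB hAB
    by_contra hne
    exact hdisj A hA B hB hne (hat A) (hunb A hA) subset_rfl hAB.subset
  by_contra hunc
  obtain ⟨_, ⟨A, hA, rfl⟩, _, ⟨B, hB, rfl⟩, hne, Z, hZ, hZA, hZB⟩ := hccc (hat '' 𝔛)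
    (by rintro _ ⟨A, hA, rfl⟩; exact ⟨hat_mem S 𝔛 h hA hRCA, hunb A hA⟩)
    (fun hc => hunc (Set.countable_of_injective_of_countable_image hinj hc))
  exact hdisj A hA B hB (fun e => hne (by rw [e])) Z hZ.2 hZA hZB

end Paper
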